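/- For d odd, the orbit of e_p under the group G_d generated by the L_q equals the set of primitive vectors v ∈ ℤ^{A_d} which are congruent mod 2 to a vector of E = {ē*}∪{ē_q} and satisfy (h*)^T(v - e_p) = 0. -/

import Mathlib

open Matrix

/-- The matrix of the operator `L_p`. -/
def L (d : ℕ) (p : Fin d) : Matrix (Fin d) (Fin d) ℤ :=
  Matrix.of fun r q => if q = p then (if r < p then -1 else 1) else (if r = q then 1 else 0)

/-- The hyperelliptic Rauzy–Veech group `G_d`, generated by the operators `L_p`. -/
def Gd (d : ℕ) : Subgroup (Matrix (Fin d) (Fin d) ℤ)ˣ :=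
  Subgroup.closure {u : (Matrix (Fin d) (Fin d) ℤ)ˣ |
    ∃ p : Fin d, (u : Matrix (Fin d) (Fin d) ℤ) = L d p}

/-- The set `E = {ē*} ∪ {ē_q : q ∈ A_d}` in `(ℤ/2)^{A_d}`. -/
def Eset (d : ℕ) : Set (Fin d → ZMod 2) :=
  insert (fun _ => 1) (Set.range fun q : Fin d => Pi.single q (1 : ZMod 2))

/-- The alternating covector `h*`. -/
def hstar (d : ℕ) : Fin d → ℤ := fun i => (-1) ^ (i : ℕ)

/-!
Each `L_p` is a transvection whose direction pairs to zero with `h*` when `d` is odd, and modulo 2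
it permutes `E`; so the pairing with `h*` and membership in `E` are constant on orbits, and a vector
whose pairing with `h*` is `±1` is primitive.

Conversely, `L_p L_{p+1} L_p⁻¹` replaces the adjacent entries `x, y` of a vector by `2 x - y, x`.
Euclid's algorithm with these braid moves makes two of any three consecutive entries equal, and an
equal pair commutes with everything, so a vector of odd length is brought to the form
`(e, x₁, x₁, …, x_k, x_k)`, where `e = ±1` is its pairing with `h*`. The first generator adds `e`
to all later entries. An equal pair `x, x` can be reflected in `e` by braid moves, and conjugating
this by the first generator gives the reflection in `0`; together they change `x` by multiples of
`2 e`. Membership in `E` gives all `x_i` the same parity, so all of them can be made `0` or all of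
them `e`, and the first generator takes the former to the latter. Hence the orbit of the vector
contains `(e, …, e)`.
-/

section Doubling

variable {α β : Type*}

/-- The list `x₁, x₁, x₂, x₂, …` in which every entry of `x₁, x₂, …` is repeated once: the tail of
the normal form to which braid moves bring an integer list of odd length. -/
def double (xs : List α) : List α := xs.flatMap fun x => [x, x]

@[simp] theorem double_cons (x : α) (xs : List α) : double (x :: xs) = x :: x :: double xs := rfl

@[simp] theorem mem_double {x : α} {xs : List α} : x ∈ double xs ↔ x ∈ xs := by
  simp [double]

theorem map_double (f : α → β) (xs : List α) : (double xs).map f = double (xs.map f) := by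
  simp [double, List.map_flatMap, List.flatMap_map]

theorem alternatingSum_double {A : Type*} [AddCommGroup A] (xs : List A) :
    (double xs).alternatingSum = 0 := by
  induction xs with
  | nil => rfl
  | cons x xs ih => simp [List.alternatingSum_cons, ih]

end Doubling

/-- Equivalence of lists under the braid moves `x, y ↦ 2 x - y, x` on adjacent entries: the Hurwitz
action of the braid groups on tuples of elements of the dihedral quandle of `A`. -/
inductive BraidEquiv {A : Type*} [AddCommGroup A] : List A → List A → Prop
  | swap (x y : A) (l : List A) : BraidEquiv (x :: y :: l) ((x + x - y) :: x :: l)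
  | cons (a : A) {l l' : List A} : BraidEquiv l l' → BraidEquiv (a :: l) (a :: l')
  | refl (l : List A) : BraidEquiv l l
  | symm {l l' : List A} : BraidEquiv l l' → BraidEquiv l' l
  | trans {l l' l'' : List A} : BraidEquiv l l' → BraidEquiv l' l'' → BraidEquiv l l''

namespace BraidEquiv

section AddCommGroup

variable {A : Type*} [AddCommGroup A]

theorem swap_inv (x y : A) (l : List A) : BraidEquiv (x :: y :: l) (y :: (y + y - x) :: l) := by
  simpa using (swap y (y + y - x) l).symm

theorem pair_comm (a x : A) (l : List A) : BraidEquiv (a :: x :: x :: l) (x :: x :: a :: l) := by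
  have second_swap := swap_inv (x + x - a) x l
  rw [sub_sub_cancel] at second_swap
  exact (swap_inv a x (x :: l)).trans (cons x second_swap)

theorem append_pair_comm (x : A) (pre l : List A) :
    BraidEquiv (pre ++ x :: x :: l) (x :: x :: (pre ++ l)) := by
  induction pre with
  | nil => exact refl _
  | cons a pre ih => exact (cons a ih).trans (pair_comm a x _)

theorem reflect_pair (e x : A) (l : List A) :
    BraidEquiv (e :: x :: x :: l) (e :: (e + e - x) :: (e + e - x) :: l) :=
  (swap e x (x :: l)).trans <| (cons _ (swap e x l)).trans (pair_comm e (e + e - x) l).symm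

end AddCommGroup

-- Euclid's algorithm on the differences `a - b` and `b - c`: each of the four available moves keeps
-- one of them and adds it to, or subtracts it from, the other.
theorem exists_pair (a b c : ℤ) (l : List ℤ) :
    ∃ x u, BraidEquiv (a :: b :: c :: l) (x :: x :: u :: l) := by
  by_cases hab : a = b
  · exact ⟨a, c, hab ▸ refl _⟩
  by_cases hbc : b = c
  · exact ⟨b, a, hbc ▸ pair_comm a b l⟩
  have euclid_step : (b + b - a - c).natAbs < (b - c).natAbs ∨ (a - c).natAbs < (b - c).natAbs ∨
      (a - (b + b - c)).natAbs < (a - b).natAbs ∨ (a - c).natAbs < (a - b).natAbs := by omega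
  rcases euclid_step with _ | _ | _ | _
  · obtain ⟨x, u, hx⟩ := exists_pair b (b + b - a) c l
    exact ⟨x, u, (swap_inv a b _).trans hx⟩
  · obtain ⟨x, u, hx⟩ := exists_pair (a + a - b) a c l
    exact ⟨x, u, (swap a b _).trans hx⟩
  · obtain ⟨x, u, hx⟩ := exists_pair a (b + b - c) b l
    exact ⟨x, u, (cons a (swap b c _)).trans hx⟩
  · obtain ⟨x, u, hx⟩ := exists_pair a c (c + c - b) l
    exact ⟨x, u, (cons a (swap_inv b c _)).trans hx⟩
termination_by (a - b).natAbs + (b - c).natAbs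

theorem exists_cons_double (l : List ℤ) (hl : Odd l.length) :
    ∃ a xs, BraidEquiv l (a :: double xs) := by
  match l with
  | [] => simp at hl
  | [_, _] => simp [Nat.odd_iff] at hl
  | [a] => exact ⟨a, [], refl _⟩
  | a :: b :: c :: l =>
    obtain ⟨x, u, hpair⟩ := exists_pair a b c l
    obtain ⟨w, xs, hrest⟩ := exists_cons_double (u :: l) (by grind)
    exact ⟨w, x :: xs,
      hpair.trans <| (cons x (cons x hrest)).trans (pair_comm w x (double xs)).symm⟩
termination_by l.length

end BraidEquiv

section Transvections

variable {d : ℕ}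

/-- The direction of the transvection `L_p`, which sends `v` to `v + v_p • shearDir p`. -/
def shearDir (p : Fin d) : Fin d → ℤ := fun r => if r < p then -1 else if r = p then 0 else 1

theorem shearDir_self (p : Fin d) : shearDir p p = 0 := by simp [shearDir]

theorem L_eq_one_add_vecMulVec (p : Fin d) :
    L d p = 1 + vecMulVec (shearDir p) (Pi.single p 1) := by
  ext r q
  simp only [L, shearDir, of_apply, Matrix.add_apply, one_apply, vecMulVec_apply, Pi.single_apply]
  grind

theorem L_mulVec (p : Fin d) (v : Fin d → ℤ) : L d p *ᵥ v = v + v p • shearDir p := by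
  simp [L_eq_one_add_vecMulVec, add_mulVec, vecMulVec_mulVec]

theorem isUnit_L (p : Fin d) : IsUnit (L d p) := by
  rw [L_eq_one_add_vecMulVec]
  refine IsNilpotent.isUnit_one_add ⟨2, ?_⟩
  simp [sq, vecMulVec_mul_vecMulVec, shearDir_self]

theorem hstar_dotProduct_shearDir (hd : Odd d) (p : Fin d) : hstar d ⬝ᵥ shearDir p = 0 := by
  have sum_all : ∑ r : Fin d, hstar d r = 1 := by
    simp only [hstar]
    rw [Fin.sum_univ_eq_sum_range (fun r => (-1 : ℤ) ^ r), neg_one_geom_sum,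
      if_neg (Nat.not_even_iff_odd.2 hd)]
  have sum_below : 2 * ∑ r : Fin d, (if r < p then hstar d r else 0) = 1 - hstar d p := by
    simp only [hstar, Fin.lt_def]
    rw [Fin.sum_univ_eq_sum_range (fun r => if r < (p : ℕ) then (-1 : ℤ) ^ r else 0),
      ← Finset.sum_filter, show {r ∈ Finset.range d | r < (p : ℕ)} = Finset.range p by grind]
    simpa using mul_neg_geom_sum (-1 : ℤ) p
  have split (r : Fin d) : hstar d r * shearDir p r =
      hstar d r - 2 * (if r < p then hstar d r else 0) - (if r = p then hstar d r else 0) := by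
    simp only [shearDir]
    grind
  simp only [dotProduct, split, Finset.sum_sub_distrib, ← Finset.mul_sum, sum_all, sum_below,
    Finset.sum_ite_eq', Finset.mem_univ, if_true]
  ring

theorem hstar_dotProduct_L_mulVec (hd : Odd d) (p : Fin d) (v : Fin d → ℤ) :
    hstar d ⬝ᵥ (L d p *ᵥ v) = hstar d ⬝ᵥ v := by
  rw [L_mulVec, dotProduct_add, dotProduct_smul, hstar_dotProduct_shearDir hd, smul_zero, add_zero]

theorem hstar_dotProduct_eq_alternatingSum (v : Fin d → ℤ) :
    hstar d ⬝ᵥ v = (List.ofFn v).alternatingSum := by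
  induction d with
  | zero => simp
  | succ n ih =>
    rw [List.ofFn_succ, List.alternatingSum_cons, ← ih]
    simp [dotProduct, hstar, Fin.sum_univ_succ, pow_succ, sub_eq_add_neg]

end Transvections

section ModTwo

variable {d : ℕ}

/-- The reduction modulo 2 of the transvection `L_p`. -/
def shearModTwo (p : Fin d) (u : Fin d → ZMod 2) : Fin d → ZMod 2 := u + u p • (1 - Pi.single p 1)

theorem intCast_comp_L_mulVec (p : Fin d) (v : Fin d → ℤ) :
    Int.cast ∘ (L d p *ᵥ v) = shearModTwo p (Int.cast ∘ v) := by
  have two_dirs (r : Fin d) : (shearDir p r : ZMod 2) = 1 - (Pi.single p 1 : Fin d → ZMod 2) r := by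
    simp only [shearDir, Pi.single_apply]
    split_ifs <;> first | rfl | omega
  ext r
  simp [L_mulVec, shearModTwo, two_dirs]

theorem shearModTwo_involutive (p : Fin d) : Function.Involutive (shearModTwo p) := by
  intro u
  ext r
  simp [shearModTwo, add_assoc, CharTwo.add_self_eq_zero]

theorem shearModTwo_mem_Eset {p : Fin d} {u : Fin d → ZMod 2} (hu : u ∈ Eset d) :
    shearModTwo p u ∈ Eset d := by
  rcases hu with rfl | ⟨q, rfl⟩
  · refine Or.inr ⟨p, ?_⟩
    ext r
    rcases eq_or_ne r p with rfl | hrp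
    · simp [shearModTwo]
    · simp [shearModTwo, hrp, CharTwo.add_self_eq_zero]
  · rcases eq_or_ne q p with rfl | hqp
    · left
      ext r
      simp [shearModTwo]
    · exact Or.inr ⟨q, by simp [shearModTwo, hqp.symm]⟩

theorem L_mulVec_mem_Eset_iff (p : Fin d) (v : Fin d → ℤ) :
    Int.cast ∘ (L d p *ᵥ v) ∈ Eset d ↔ Int.cast ∘ v ∈ Eset d := by
  rw [intCast_comp_L_mulVec]
  exact ⟨fun h => shearModTwo_involutive p (Int.cast ∘ v) ▸ shearModTwo_mem_Eset h,
    shearModTwo_mem_Eset⟩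

theorem single_mem_Eset (p : Fin d) :
    (Int.cast ∘ (Pi.single p 1 : Fin d → ℤ) : Fin d → ZMod 2) ∈ Eset d := by
  refine Or.inr ⟨p, ?_⟩
  ext r
  simp [Pi.single_apply]

theorem forall_even_or_forall_odd_of_mem_Eset {v : Fin d → ℤ} {a : ℤ} {l : List ℤ}
    (hv : Int.cast ∘ v ∈ Eset d) (hl : List.ofFn v = a :: l) (ha : Odd a) :
    (∀ x ∈ l, Even x) ∨ ∀ x ∈ l, Odd x := by
  cases d with
  | zero => simp at hl
  | succ n =>
    rw [List.ofFn_succ, List.cons.injEq] at hl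
    obtain ⟨rfl, rfl⟩ := hl
    simp only [List.forall_mem_ofFn_iff]
    rcases hv with hones | ⟨q, hq⟩
    · exact Or.inr fun i => ZMod.intCast_eq_one_iff_odd.1 (congrFun hones i.succ)
    · obtain rfl : q = 0 := by
        by_contra hq0
        have head_even : (v 0 : ZMod 2) = 0 := by simpa [Ne.symm hq0] using (congrFun hq 0).symm
        exact Int.not_even_iff_odd.2 ha (ZMod.intCast_eq_zero_iff_even.1 head_even)
      refine Or.inl fun i => ZMod.intCast_eq_zero_iff_even.1 ?_
      simpa using (congrFun hq i.succ).symm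

end ModTwo

section Orbits

variable {d : ℕ}

/-- Two integer vectors lie in the same orbit of `G_d`. -/
def SameOrbit (v w : Fin d → ℤ) : Prop :=
  ∃ B ∈ Gd d, (B : Matrix (Fin d) (Fin d) ℤ) *ᵥ v = w

namespace SameOrbit

theorem refl (v : Fin d → ℤ) : SameOrbit v v := ⟨1, one_mem _, by simp⟩

theorem symm {v w : Fin d → ℤ} : SameOrbit v w → SameOrbit w v := by
  rintro ⟨B, hB, rfl⟩
  exact ⟨B⁻¹, inv_mem hB, by simp⟩

theorem trans {u v w : Fin d → ℤ} : SameOrbit u v → SameOrbit v w → SameOrbit u w := by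
  rintro ⟨B, hB, rfl⟩ ⟨C, hC, rfl⟩
  exact ⟨C * B, mul_mem hC hB, by simp⟩

theorem L_mulVec (p : Fin d) (v : Fin d → ℤ) : SameOrbit v (L d p *ᵥ v) := by
  obtain ⟨B, hB⟩ := isUnit_L p
  exact ⟨B, Subgroup.subset_closure ⟨p, hB⟩, by rw [hB]⟩

theorem map_eq {α : Type*} {f : (Fin d → ℤ) → α} (hf : ∀ p v, f (L d p *ᵥ v) = f v)
    {v w : Fin d → ℤ} (h : SameOrbit v w) : f w = f v := by
  obtain ⟨B, hB, rfl⟩ := h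
  induction hB using Subgroup.closure_induction generalizing v with
  | mem B hB =>
    obtain ⟨p, hp⟩ := hB
    rw [hp, hf]
  | one => simp
  | mul B C _ _ ihB ihC => rw [Units.val_mul, ← mulVec_mulVec, ihB, ihC]
  | inv B _ ih => simpa using (ih (v := (B⁻¹).val *ᵥ v)).symm

theorem hstar_dotProduct_eq (hd : Odd d) {v w : Fin d → ℤ} (h : SameOrbit v w) :
    hstar d ⬝ᵥ w = hstar d ⬝ᵥ v :=
  h.map_eq (hstar_dotProduct_L_mulVec hd)

theorem mem_Eset_iff {v w : Fin d → ℤ} (h : SameOrbit v w) :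
    Int.cast ∘ w ∈ Eset d ↔ Int.cast ∘ v ∈ Eset d :=
  iff_of_eq <| h.map_eq (f := fun v => Int.cast ∘ v ∈ Eset d)
    fun p v => propext (L_mulVec_mem_Eset_iff p v)

theorem braid_move {i j : Fin d} (hij : (i : ℕ) + 1 = j) (v : Fin d → ℤ) :
    SameOrbit v (Function.update (Function.update v i (v i + v i - v j)) j (v i)) := by
  obtain ⟨u, rfl⟩ : ∃ u, L d i *ᵥ u = v := by
    obtain ⟨B, hB⟩ := isUnit_L i
    exact ⟨(B⁻¹).val *ᵥ v, by rw [← hB]; simp⟩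
  have conjugate : Function.update (Function.update (L d i *ᵥ u) i
      ((L d i *ᵥ u) i + (L d i *ᵥ u) i - (L d i *ᵥ u) j)) j ((L d i *ᵥ u) i) =
      L d i *ᵥ (L d j *ᵥ u) := by
    ext r
    simp only [_root_.L_mulVec, Function.update_apply, Pi.add_apply, Pi.smul_apply, shearDir,
      smul_eq_mul]
    grind
  rw [conjugate]
  exact (L_mulVec i u).symm.trans <| (L_mulVec j u).trans (L_mulVec i _)

end SameOrbit

/-- Two integer lists have the same length `d`, and the vectors they list lie in the same orbit of
`G_d`. -/
def OrbitEquiv (l l' : List ℤ) : Prop :=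
  ∃ (d : ℕ) (v w : Fin d → ℤ), SameOrbit v w ∧ List.ofFn v = l ∧ List.ofFn w = l'

theorem OrbitEquiv.exists_ofFn_eq {v : Fin d → ℤ} {l : List ℤ} (h : OrbitEquiv (List.ofFn v) l) :
    ∃ w, SameOrbit v w ∧ List.ofFn w = l := by
  obtain ⟨d', v', w, hvw, hv, hw⟩ := h
  obtain rfl : d' = d := by simpa using congrArg List.length hv
  exact ⟨w, List.ofFn_injective hv ▸ hvw, hw⟩

theorem orbitEquiv_ofFn {v w : Fin d → ℤ} :
    OrbitEquiv (List.ofFn v) (List.ofFn w) ↔ SameOrbit v w := by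
  refine ⟨fun h => ?_, fun h => ⟨d, v, w, h, rfl, rfl⟩⟩
  obtain ⟨w', hvw, hw⟩ := h.exists_ofFn_eq
  exact List.ofFn_injective hw ▸ hvw

namespace OrbitEquiv

theorem refl (l : List ℤ) : OrbitEquiv l l := ⟨_, l.get, l.get, .refl _, by simp, by simp⟩

theorem symm {l l' : List ℤ} : OrbitEquiv l l' → OrbitEquiv l' l := by
  rintro ⟨d, v, w, h, hv, hw⟩
  exact ⟨d, w, v, h.symm, hw, hv⟩

theorem trans {l l' l'' : List ℤ} : OrbitEquiv l l' → OrbitEquiv l' l'' → OrbitEquiv l l'' := by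
  rintro ⟨d, u, v, huv, rfl, rfl⟩ ⟨d', v', w, hvw, hv, rfl⟩
  obtain rfl : d' = d := by simpa using congrArg List.length hv
  obtain rfl := List.ofFn_injective hv
  exact orbitEquiv_ofFn.2 (huv.trans hvw)

theorem add_head (x : ℤ) (l : List ℤ) : OrbitEquiv (x :: l) (x :: l.map (· + x)) := by
  refine ⟨_, _, _, .L_mulVec (0 : Fin (l.length + 1)) (x :: l).get, by simp, ?_⟩
  refine List.ext_getElem (by simp) fun n h₁ h₂ => ?_
  simp only [List.getElem_ofFn, L_mulVec]
  cases n <;> simp [shearDir]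

theorem swap (pre : List ℤ) (x y : ℤ) (l : List ℤ) :
    OrbitEquiv (pre ++ x :: y :: l) (pre ++ (x + x - y) :: x :: l) := by
  have hlen : pre.length + 1 < (pre ++ x :: y :: l).length := by simp
  refine ⟨_, _, _, .braid_move (i := ⟨pre.length, by omega⟩) (j := ⟨pre.length + 1, hlen⟩) rfl
    (pre ++ x :: y :: l).get, List.ofFn_get _, ?_⟩
  apply List.ext_getElem (List.length_ofFn.trans (by simp))
  intro n h₁ h₂
  simp only [List.getElem_ofFn, Function.update_apply, Fin.ext_iff, List.get_eq_getElem]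
  grind

end OrbitEquiv

theorem BraidEquiv.orbitEquiv_append {l l' : List ℤ} (h : BraidEquiv l l') (pre : List ℤ) :
    OrbitEquiv (pre ++ l) (pre ++ l') := by
  induction h generalizing pre with
  | swap x y l => exact .swap pre x y l
  | cons a _ ih => simpa using ih (pre ++ [a])
  | refl l => exact .refl _
  | symm _ ih => exact (ih pre).symm
  | trans _ _ ih ih' => exact (ih pre).trans (ih' pre)

theorem BraidEquiv.orbitEquiv {l l' : List ℤ} (h : BraidEquiv l l') : OrbitEquiv l l' :=
  h.orbitEquiv_append []

namespace OrbitEquiv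

theorem neg_pair (e x : ℤ) (l : List ℤ) :
    OrbitEquiv (e :: x :: x :: l) (e :: -x :: -x :: l) := by
  have reflect := (BraidEquiv.reflect_pair e (x + e) (l.map (· + e))).orbitEquiv
  rw [show e + e - (x + e) = -x + e by ring] at reflect
  exact (add_head e (x :: x :: l)).trans <| reflect.trans (add_head e (-x :: -x :: l)).symm

theorem add_two_mul_pair (e x m : ℤ) (l : List ℤ) :
    OrbitEquiv (e :: x :: x :: l) (e :: (x + 2 * e * m) :: (x + 2 * e * m) :: l) := by
  have shift (y : ℤ) : OrbitEquiv (e :: y :: y :: l) (e :: (y + 2 * e) :: (y + 2 * e) :: l) := by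
    have reflect := (BraidEquiv.reflect_pair e (-y) l).orbitEquiv
    rw [show e + e - -y = y + 2 * e by ring] at reflect
    exact (neg_pair e y l).trans reflect
  induction m with
  | zero => simpa using refl _
  | succ m ih => simpa [mul_add, add_assoc] using ih.trans (shift _)
  | pred m ih =>
    refine ih.trans (symm ?_)
    convert shift (x + 2 * e * (-m - 1)) using 3 <;> ring_nf

theorem replace_pair {e x y : ℤ} (h : 2 * e ∣ y - x) (pre l : List ℤ) :
    OrbitEquiv (e :: (pre ++ x :: x :: l)) (e :: (pre ++ y :: y :: l)) := by
  obtain ⟨m, hm⟩ := h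
  have move_front (z : ℤ) :
      OrbitEquiv (e :: (pre ++ z :: z :: l)) (e :: z :: z :: (pre ++ l)) :=
    (BraidEquiv.cons e (.append_pair_comm z pre l)).orbitEquiv
  have shift := add_two_mul_pair e x m (pre ++ l)
  rw [← hm, add_sub_cancel] at shift
  exact (move_front x).trans <| shift.trans (move_front y).symm

theorem replace_double {e : ℤ} {xs ys : List ℤ} (h : List.Forall₂ (fun x y => 2 * e ∣ y - x) xs ys)
    (pre : List ℤ) : OrbitEquiv (e :: (pre ++ double xs)) (e :: (pre ++ double ys)) := by
  induction h generalizing pre with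
  | nil => exact refl _
  | @cons x y xs ys hxy _ ih =>
    exact (replace_pair hxy pre (double xs)).trans (by simpa using ih (pre ++ [y, y]))

theorem double_map_const {e c : ℤ} {xs : List ℤ} (h : ∀ x ∈ xs, 2 * e ∣ c - x) :
    OrbitEquiv (e :: double xs) (e :: double (xs.map fun _ => c)) :=
  replace_double (List.forall₂_map_right_iff.2 (List.forall₂_same.2 h)) []

theorem cons_double_const {e : ℤ} {xs : List ℤ}
    (h : (∀ x ∈ xs, 2 * e ∣ x) ∨ ∀ x ∈ xs, 2 * e ∣ e - x) :
    OrbitEquiv (e :: double xs) ((e :: double xs).map fun _ => e) := by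
  rw [List.map_cons, map_double]
  rcases h with hzero | he
  · have to_zero : OrbitEquiv (e :: double xs) (e :: double (xs.map fun _ => 0)) :=
      double_map_const (by simpa using hzero)
    simpa [map_double, Function.comp_def] using to_zero.trans (add_head e _)
  · exact double_map_const he

end OrbitEquiv

end Orbits

theorem sameOrbit_const {d : ℕ} (hd : Odd d) {e : ℤ} (he : IsUnit e) {v : Fin d → ℤ}
    (hv : hstar d ⬝ᵥ v = e) (hE : Int.cast ∘ v ∈ Eset d) : SameOrbit v (fun _ => e) := by
  obtain ⟨a, xs, hbraid⟩ := BraidEquiv.exists_cons_double (List.ofFn v) (by simpa)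
  obtain ⟨w, hvw, hw⟩ := hbraid.orbitEquiv.exists_ofFn_eq
  obtain rfl : a = e := by
    rw [← hv, ← hvw.hstar_dotProduct_eq hd, hstar_dotProduct_eq_alternatingSum, hw]
    simp [List.alternatingSum_cons, alternatingSum_double]
  have odd_a : Odd a := by rcases Int.isUnit_iff.1 he with rfl | rfl <;> decide
  have parity : (∀ x ∈ xs, Even x) ∨ ∀ x ∈ xs, Odd x := by
    simpa using forall_even_or_forall_odd_of_mem_Eset (hvw.mem_Eset_iff.2 hE) hw odd_a
  have tail_dvd : (∀ x ∈ xs, 2 * a ∣ x) ∨ ∀ x ∈ xs, 2 * a ∣ a - x := by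
    simp only [he.mul_right_dvd]
    exact parity.imp (fun h x hx => (h x hx).two_dvd)
      fun h x hx => (odd_a.sub_odd (h x hx)).two_dvd
  have to_const := OrbitEquiv.cons_double_const tail_dvd
  rw [← hw, List.map_ofFn, orbitEquiv_ofFn] at to_const
  exact hvw.trans to_const

theorem sameOrbit_of_hstar_dotProduct_eq {d : ℕ} (hd : Odd d) {v w : Fin d → ℤ}
    (hunit : IsUnit (hstar d ⬝ᵥ v)) (hvw : hstar d ⬝ᵥ v = hstar d ⬝ᵥ w)
    (hv : Int.cast ∘ v ∈ Eset d) (hw : Int.cast ∘ w ∈ Eset d) : SameOrbit v w :=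
  (sameOrbit_const hd hunit rfl hv).trans (sameOrbit_const hd hunit hvw.symm hw).symm

theorem gcd_eq_one_of_isUnit_dotProduct {R n : Type*} [Fintype n] [CommSemiring R]
    [NormalizedGCDMonoid R] {a v : n → R} (h : IsUnit (a ⬝ᵥ v)) : Finset.univ.gcd v = 1 := by
  have gcd_dvd : Finset.univ.gcd v ∣ a ⬝ᵥ v :=
    Finset.dvd_sum fun i hi => (Finset.gcd_dvd hi).mul_left _
  rw [← Finset.normalize_gcd]
  exact normalize_eq_one.2 (isUnit_of_dvd_unit gcd_dvd h)

/-- For `d` odd, the orbit of `e_p` under `G_d` is the set of primitive vectors of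
`ℤ^{A_d}` congruent mod 2 to a vector of `E` and satisfying `(h*)ᵀ (v - e_p) = 0`. -/
theorem orbit_odd (d : ℕ) (hd : 3 ≤ d) (ho : Odd d) (p : Fin d) :
    {v : Fin d → ℤ | ∃ B ∈ Gd d,
        (B : Matrix (Fin d) (Fin d) ℤ).mulVec (Pi.single p 1) = v} =
      {v : Fin d → ℤ | Finset.univ.gcd v = 1 ∧ (fun i => (v i : ZMod 2)) ∈ Eset d ∧
        ∑ i : Fin d, hstar d i * (v i - (Pi.single p 1 : Fin d → ℤ) i) = 0} := by
  have isUnit_single : IsUnit (hstar d ⬝ᵥ Pi.single p 1) := by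
    simpa [hstar] using (isUnit_one (M := ℤ)).neg.pow p
  have pairing_iff (v : Fin d → ℤ) : ∑ i, hstar d i * (v i - (Pi.single p 1 : Fin d → ℤ) i) = 0 ↔
      hstar d ⬝ᵥ Pi.single p 1 = hstar d ⬝ᵥ v := by
    rw [eq_comm (a := hstar d ⬝ᵥ _), ← sub_eq_zero (a := hstar d ⬝ᵥ v), ← dotProduct_sub]
    rfl
  ext v
  simp only [Set.mem_ofPred_eq, pairing_iff]
  constructor
  · intro (h : SameOrbit (Pi.single p 1) v)
    have pairing := h.hstar_dotProduct_eq ho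
    exact ⟨gcd_eq_one_of_isUnit_dotProduct (pairing ▸ isUnit_single),
      h.mem_Eset_iff.2 (single_mem_Eset p), pairing.symm⟩
  · rintro ⟨-, hE, pairing⟩
    exact sameOrbit_of_hstar_dotProduct_eq ho isUnit_single pairing (single_mem_Eset p) hE
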